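/- If the allocation set is swappable, then there exists a mixed allocation that is both Pareto Efficient and envy-free. -/

import Mathlib

/-!
Let a fictitious player choose a weight `y` on the pairs `(i, h)` so as to maximize the expected
envy of `i` towards `h`, and let a planner choose a mixed allocation `p` that maximizes the
utilitarian welfare weighted by the first marginal of `y`. At an equilibrium of this game `p` is
envy-free: if the maximal envy `M` were positive, every player of positive weight would envy
somebody by `M`; following these envies leads to a cycle, and permuting the bundles along it, which
swappability allows, would increase the welfare. Adding `ε > 0` to the weights makes `p` Pareto
efficient, and letting `ε` tend to `0` keeps efficiency since it depends only on the support of `p`.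

The equilibrium is a fixed point of Nash's improvement map on a simplex; Brouwer's theorem on the
simplex follows from Scarf's combinatorial lemma applied to finer and finer grids.
-/

section Scarf

open Finset

variable {I X α : Type*} [LinearOrder α] {r : I → X → α} {σ τ : Finset X} {B C : Finset I}
  {a b : I → X} {k : I}

/-- Scarf's dominance: no point of `X` lies strictly above all the `C`-minima of `τ`. Here `r i x`
is the rank of `x` in the order that belongs to the index `i`. -/
def IsDominant (r : I → X → α) (τ : Finset X) (C : Finset I) : Prop :=
  ∀ y, ∃ i ∈ C, ∀ x ∈ τ, r i y ≤ r i x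

/-- A room of the path-following argument: a dominant pair with as many points as indices. -/
structure IsRoom (r : I → X → α) (R : Finset X × Finset I) : Prop where
  isDominant : IsDominant r R.1 R.2
  card_eq : #R.1 = #R.2

/-- `R` is a room having the pair `(σ, C)` as a door; the doors of interest satisfy
`#C = #σ + 1`, so that `R` arises from the door by adding a point or by removing an index. -/
structure IsRoomAt (r : I → X → α) (σ : Finset X) (C : Finset I) (R : Finset X × Finset I) : Prop
    extends IsRoom r R where
  subset_fst : σ ⊆ R.1
  snd_subset : R.2 ⊆ C

/-- For every `i ∈ C`, the point `a i` is a minimum of `τ` in the order of `i`. -/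
def IsMinSelection (r : I → X → α) (C : Finset I) (τ : Finset X) (a : I → X) : Prop :=
  ∀ i ∈ C, a i ∈ τ ∧ ∀ x ∈ τ, r i (a i) ≤ r i x

lemma IsDominant.mono (h : IsDominant r τ B) (hσ : σ ⊆ τ) (hB : B ⊆ C) : IsDominant r σ C := by
  intro y
  obtain ⟨i, hi, hy⟩ := h y
  exact ⟨i, hB hi, fun x hx => hy x (hσ hx)⟩

lemma exists_isMinSelection (r : I → X → α) (C : Finset I) (hτ : τ.Nonempty) :
    ∃ a, IsMinSelection r C τ a := by
  choose a ha using fun i => τ.exists_min_image (r i) hτ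
  exact ⟨a, fun i _ => ha i⟩

lemma IsMinSelection.image_eq [DecidableEq X] (ha : IsMinSelection r C τ a)
    (hr : ∀ i, Function.Injective (r i)) (h : IsDominant r τ C) : C.image a = τ := by
  refine Subset.antisymm (image_subset_iff.2 fun i hi => (ha i hi).1) fun x hx => ?_
  obtain ⟨i, hi, hxi⟩ := h x
  exact mem_image.2 ⟨i, hi, hr i (((ha i hi).2 x hx).antisymm (hxi _ (ha i hi).1))⟩

lemma IsMinSelection.eq_of_subset (ha : IsMinSelection r C σ a) (hb : IsMinSelection r B τ b)
    (hr : ∀ i, Function.Injective (r i)) (hσ : σ ⊆ τ) {i : I} (hiC : i ∈ C) (hiB : i ∈ B)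
    (hi : b i ∈ σ) : a i = b i :=
  hr i (((ha i hiC).2 _ hi).antisymm ((hb i hiB).2 _ (hσ (ha i hiC).1)))

lemma IsRoom.injOn_of_isMinSelection {R : Finset X × Finset I} (hR : IsRoom r R)
    (hr : ∀ i, Function.Injective (r i)) (ha : IsMinSelection r R.2 R.1 a) :
    Set.InjOn a (R.2 : Set I) := by
  classical
  exact injOn_of_card_image_eq (by rw [ha.image_eq hr hR.isDominant, hR.card_eq])

open Classical in
lemma card_isRoomAt_empty_singleton [Fintype X] [Fintype I] [Nonempty X] (i : I)
    (hr : Function.Injective (r i)) : #{R | IsRoomAt r ∅ {i} R} = 1 := by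
  obtain ⟨x, hx⟩ := Finite.exists_max (r i)
  rw [card_eq_one]
  refine ⟨({x}, {i}), ext fun R => ?_⟩
  simp only [mem_filter, mem_univ, true_and, mem_singleton]
  constructor
  · intro hR
    obtain ⟨l, hl, hxl⟩ := hR.isDominant x
    have hR2 : R.2 = {i} := (Nonempty.subset_singleton_iff ⟨l, hl⟩).1 hR.snd_subset
    obtain rfl : l = i := mem_singleton.1 (hR2 ▸ hl)
    obtain ⟨y, hy⟩ := card_eq_one.1 (hR.card_eq.trans (hR2 ▸ card_singleton l))
    have hyx : y = x := hr ((hx y).antisymm (hxl y (hy ▸ mem_singleton_self y)))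
    exact Prod.ext (hyx ▸ hy) hR2
  · rintro rfl
    refine ⟨⟨fun y => ⟨i, mem_singleton_self i, ?_⟩, rfl⟩, empty_subset _, subset_rfl⟩
    simpa only [mem_singleton, forall_eq] using hx y

section Across

variable [DecidableEq I]

/-- `R` is the room entered through the door `(σ, C)` by dropping the index `k`: the other minima
`a i` of `σ` remain minima. -/
structure IsRoomAcross (r : I → X → α) (σ : Finset X) (C : Finset I) (a : I → X) (k : I)
    (R : Finset X × Finset I) : Prop extends IsRoomAt r σ C R where
  erase_subset : C.erase k ⊆ R.2
  isMinSelection : IsMinSelection r (C.erase k) R.1 a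

lemma IsRoomAt.exists_isRoomAcross {R : Finset X × Finset I} (hR : IsRoomAt r σ C R)
    (hr : ∀ i, Function.Injective (r i)) (hσ : σ.Nonempty) (hcard : #C = #σ + 1)
    (ha : IsMinSelection r C σ a) : ∃ k ∈ C, IsRoomAcross r σ C a k R := by
  classical
  obtain ⟨b, hb⟩ := exists_isMinSelection r R.2 (hσ.mono hR.subset_fst)
  suffices ∃ k ∈ C, C.erase k ⊆ R.2 ∧ ∀ l ∈ C.erase k, b l ∈ σ by
    obtain ⟨k, hk, hsub, hbσ⟩ := this
    refine ⟨k, hk, hR, hsub, fun l hl => ?_⟩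
    rw [ha.eq_of_subset hb hr hR.subset_fst (mem_of_mem_erase hl) (hsub hl) (hbσ l hl)]
    exact hb l (hsub hl)
  have hRcard := hR.card_eq
  by_cases hC : R.2 = C
  · obtain ⟨x, -, hins⟩ := exists_eq_insert_iff.2 ⟨hR.subset_fst, by rw [hRcard, hC, hcard]⟩
    obtain ⟨k, hk, hkx⟩ : ∃ k ∈ R.2, b k = x := by
      rw [← mem_image, hb.image_eq hr hR.isDominant, ← hins]
      exact mem_insert_self x σ
    refine ⟨k, hC ▸ hk, hC ▸ erase_subset k C, fun l hl => ?_⟩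
    have hlR : l ∈ R.2 := hC ▸ mem_of_mem_erase hl
    have hbl : b l ∈ insert x σ := hins ▸ (hb l hlR).1
    refine mem_of_mem_insert_of_ne hbl fun h => ne_of_mem_erase hl ?_
    exact hR.injOn_of_isMinSelection hr hb hlR hk (h.trans hkx.symm)
  · have hlt := card_lt_card (hR.snd_subset.ssubset_of_ne hC)
    have hle := card_le_card hR.subset_fst
    obtain ⟨k, hk, hins⟩ := exists_eq_insert_iff.2 ⟨hR.snd_subset, by omega⟩
    have hσR : σ = R.1 := eq_of_subset_of_card_le hR.subset_fst (by omega)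
    have herase : C.erase k = R.2 := by rw [← hins, erase_insert hk]
    exact ⟨k, hins ▸ mem_insert_self k R.2, herase.le,
      fun l hl => hσR ▸ (hb l (herase ▸ hl)).1⟩

lemma IsRoomAcross.injOn {R : Finset X × Finset I} (hR : IsRoomAcross r σ C a k R)
    (hr : ∀ i, Function.Injective (r i)) (hσ : σ.Nonempty) :
    Set.InjOn a (C.erase k : Set I) := by
  obtain ⟨b, hb⟩ := exists_isMinSelection r R.2 (hσ.mono hR.subset_fst)
  refine ((hR.injOn_of_isMinSelection hr hb).mono (coe_subset.2 hR.erase_subset)).congr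
    fun l hl => ?_
  have hl : l ∈ C.erase k := mod_cast hl
  exact hb.eq_of_subset hR.isMinSelection hr subset_rfl (hR.erase_subset hl) hl
    (hR.isMinSelection l hl).1

lemma IsRoomAcross.eq_of_ne {R : Finset X × Finset I} {i j : I}
    (hi : IsRoomAcross r σ C a i R) (hj : IsRoomAcross r σ C a j R)
    (hr : ∀ i, Function.Injective (r i)) (hcard : #C = #σ + 1) (ha : IsMinSelection r C σ a) :
    i = j := by
  classical
  by_contra hij
  have hmem : ∀ l ∈ C, l ∈ C.erase i ∨ l ∈ C.erase j := by grind
  have hR2 : R.2 = C := hi.snd_subset.antisymm fun l hl =>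
    (hmem l hl).elim (fun h => hi.erase_subset h) fun h => hj.erase_subset h
  have hmin : IsMinSelection r R.2 R.1 a := fun l hl =>
    (hmem l (hi.snd_subset hl)).elim (hi.isMinSelection l) (hj.isMinSelection l)
  have hle : #R.1 ≤ #σ := by
    rw [← hmin.image_eq hr hi.isDominant]
    exact card_le_card (image_subset_iff.2 fun l hl => (ha l (hi.snd_subset hl)).1)
  have hRcard := hi.card_eq
  rw [hR2] at hRcard
  omega

lemma IsRoomAcross.eq_or_exists_insert [DecidableEq X] {R : Finset X × Finset I}
    (hR : IsRoomAcross r σ C a k R) (hr : ∀ i, Function.Injective (r i)) (hk : k ∈ C)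
    (hcard : #C = #σ + 1) (ha : IsMinSelection r C σ a) :
    R = (σ, C.erase k) ∨
      ∃ x, R = (insert x σ, C) ∧ ∀ l ∈ C.erase k, r l (a l) < r l x := by
  have hRcard := hR.card_eq
  have hek := card_erase_of_mem hk
  by_cases hkR : k ∈ R.2
  · right
    have hR2 : R.2 = C := hR.snd_subset.antisymm fun l hl => by
      by_cases hlk : l = k
      · exact hlk ▸ hkR
      · exact hR.erase_subset (mem_erase.2 ⟨hlk, hl⟩)
    obtain ⟨x, hx, hins⟩ := exists_eq_insert_iff.2 ⟨hR.subset_fst, by rw [hRcard, hR2, hcard]⟩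
    refine ⟨x, Prod.ext hins.symm hR2, fun l hl => ?_⟩
    refine ((hR.isMinSelection l hl).2 x (hins ▸ mem_insert_self x σ)).lt_of_ne fun h => hx ?_
    exact hr l h ▸ (ha l (mem_of_mem_erase hl)).1
  · left
    have hR2 : R.2 = C.erase k := (subset_erase.2 ⟨hR.snd_subset, hkR⟩).antisymm hR.erase_subset
    exact Prod.ext (eq_of_subset_of_card_le hR.subset_fst (by rw [hRcard, hR2]; omega)).symm hR2

lemma IsRoomAcross.unique {R R' : Finset X × Finset I}
    (hR : IsRoomAcross r σ C a k R) (hR' : IsRoomAcross r σ C a k R')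
    (hr : ∀ i, Function.Injective (r i)) (hk : k ∈ C) (hcard : #C = #σ + 1)
    (ha : IsMinSelection r C σ a) : R = R' := by
  classical
  have not_above : ∀ {x}, IsRoom r (σ, C.erase k) → ¬ ∀ l ∈ C.erase k, r l (a l) < r l x := by
    intro x hroom hx
    obtain ⟨l, hl, hxl⟩ := hroom.isDominant x
    exact (hx l hl).not_ge (hxl _ (ha l (mem_of_mem_erase hl)).1)
  have le_of_above : ∀ {x y}, IsRoom r (insert x σ, C) → (∀ l ∈ C.erase k, r l (a l) < r l y) →
      r k y ≤ r k x := by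
    intro x y hroom hy
    obtain ⟨l, hl, hyl⟩ := hroom.isDominant y
    obtain rfl : l = k := by
      by_contra hlk
      exact (hy l (mem_erase.2 ⟨hlk, hl⟩)).not_ge (hyl _ (mem_insert_of_mem (ha l hl).1))
    exact hyl x (mem_insert_self x σ)
  obtain rfl | ⟨x, rfl, hx⟩ := hR.eq_or_exists_insert hr hk hcard ha <;>
    obtain rfl | ⟨y, rfl, hy⟩ := hR'.eq_or_exists_insert hr hk hcard ha
  · rfl
  · exact absurd hy (not_above hR.toIsRoom)
  · exact absurd hx (not_above hR'.toIsRoom)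
  · rw [hr k ((le_of_above hR'.toIsRoom hx).antisymm (le_of_above hR.toIsRoom hy))]

lemma IsMinSelection.isDominant_insert [DecidableEq X] {x : X} (ha : IsMinSelection r C σ a)
    (h : IsDominant r σ C) (hx : ∀ l ∈ C.erase k, r l (a l) < r l x)
    (hmax : ∀ y, (∀ l ∈ C.erase k, r l (a l) < r l y) → r k y ≤ r k x) :
    IsDominant r (insert x σ) C := by
  intro y
  by_cases hy : ∀ l ∈ C.erase k, r l (a l) < r l y
  · obtain ⟨l, hl, hyl⟩ := h y
    obtain rfl : l = k := by
      by_contra hlk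
      exact (hy l (mem_erase.2 ⟨hlk, hl⟩)).not_ge (hyl _ (ha l hl).1)
    exact ⟨l, hl, (forall_mem_insert ..).2 ⟨hmax y hy, hyl⟩⟩
  · push Not at hy
    obtain ⟨l, hl, hyl⟩ := hy
    exact ⟨l, mem_of_mem_erase hl, (forall_mem_insert ..).2
      ⟨hyl.trans (hx l hl).le, fun z hz => hyl.trans ((ha l (mem_of_mem_erase hl)).2 z hz)⟩⟩

lemma exists_isRoomAcross [Finite X] (h : IsDominant r σ C) (hk : k ∈ C) (hcard : #C = #σ + 1)
    (ha : IsMinSelection r C σ a) (hsurj : ∀ x ∈ σ, ∃ l ∈ C.erase k, a l = x) :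
    ∃ R, IsRoomAcross r σ C a k R := by
  classical
  have ha' : ∀ l ∈ C.erase k, a l ∈ σ ∧ ∀ x ∈ σ, r l (a l) ≤ r l x :=
    fun l hl => ha l (mem_of_mem_erase hl)
  let above : Set X := {y | ∀ l ∈ C.erase k, r l (a l) < r l y}
  obtain hempty | hne := above.eq_empty_or_nonempty
  · refine ⟨(σ, C.erase k), ⟨⟨⟨fun y => ?_, ?_⟩, subset_rfl, erase_subset k C⟩, subset_rfl, ha'⟩⟩
    · have hy : ¬ ∀ l ∈ C.erase k, r l (a l) < r l y := Set.eq_empty_iff_forall_notMem.1 hempty y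
      push Not at hy
      obtain ⟨l, hl, hyl⟩ := hy
      exact ⟨l, hl, fun x hx => hyl.trans ((ha' l hl).2 x hx)⟩
    · simp only [card_erase_of_mem hk, hcard, add_tsub_cancel_right]
  · obtain ⟨x, hx, hmax⟩ := Set.exists_max_image above (r k) above.toFinite hne
    have hxσ : x ∉ σ := fun hxσ => by
      obtain ⟨l, hl, rfl⟩ := hsurj x hxσ
      exact (hx l hl).false
    refine ⟨(insert x σ, C), ⟨⟨⟨ha.isDominant_insert h hx hmax, ?_⟩, subset_insert x σ, subset_rfl⟩,
      erase_subset k C, fun l hl => ⟨mem_insert_of_mem (ha' l hl).1, ?_⟩⟩⟩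
    · simp only [card_insert_of_notMem hxσ, hcard]
    · exact (forall_mem_insert ..).2 ⟨(hx l hl).le, (ha' l hl).2⟩

end Across

open Classical in
lemma IsDominant.card_isRoomAt_eq_two [Fintype X] [Fintype I] (h : IsDominant r σ C)
    (hr : ∀ i, Function.Injective (r i)) (hσ : σ.Nonempty) (hcard : #C = #σ + 1) :
    #{R | IsRoomAt r σ C R} = 2 := by
  obtain ⟨a, ha⟩ := exists_isMinSelection r C hσ
  obtain ⟨i, hi, j, hj, hij, haij⟩ : ∃ i ∈ C, ∃ j ∈ C, i ≠ j ∧ a i = a j :=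
    exists_ne_map_eq_of_card_lt_of_maps_to (t := σ) (by omega) fun l hl => (ha l hl).1
  have himage := ha.image_eq hr h
  obtain ⟨Ri, hRi⟩ := exists_isRoomAcross (k := i) h hi hcard ha (by grind)
  obtain ⟨Rj, hRj⟩ := exists_isRoomAcross (k := j) h hj hcard ha (by grind)
  have hne : Ri ≠ Rj := by
    rintro rfl
    exact hij (hRi.eq_of_ne hRj hr hcard ha)
  suffices ({R | IsRoomAt r σ C R} : Finset (Finset X × Finset I)) = {Ri, Rj} by
    rw [this, card_pair hne]
  ext R
  simp only [mem_filter, mem_univ, true_and, mem_insert, mem_singleton]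
  constructor
  · intro hR
    obtain ⟨k, _, hRk⟩ := hR.exists_isRoomAcross hr hσ hcard ha
    obtain rfl | rfl : k = i ∨ k = j := by
      by_contra! hcon
      exact hij (hRk.injOn hr hσ (by simp [hi, hcon.1.symm]) (by simp [hj, hcon.2.symm]) haij)
    · exact .inl (hRk.unique hRi hr hi hcard ha)
    · exact .inr (hRk.unique hRj hr hj hcard ha)
  · rintro (rfl | rfl)
    · exact hRi.toIsRoomAt
    · exact hRj.toIsRoomAt

open Classical in
lemma even_card_isRoomAt [Fintype X] [Fintype I] (hr : ∀ i, Function.Injective (r i))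
    (hσ : σ.Nonempty) (hcard : #C = #σ + 1) : Even #{R | IsRoomAt r σ C R} := by
  by_cases h : IsDominant r σ C
  · rw [h.card_isRoomAt_eq_two hr hσ hcard]
    exact even_two
  · rw [filter_false_of_mem fun R _ hR => h (hR.isDominant.mono hR.subset_fst hR.snd_subset)]
    exact Even.zero

variable [DecidableEq I]

/-- A door of type `i₀` for the colouring `c`: a set carrying distinct colours other than `i₀`. It
stands for the pair formed with the set of its colours and `i₀`. -/
structure IsDoor (c : X → I) (i₀ : I) (σ : Finset X) : Prop where
  injOn : Set.InjOn c (σ : Set X)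
  notMem : i₀ ∉ σ.image c

/-- `σ` is a door of the pair `(τ, B)`: the pair that `σ` stands for arises from `(τ, B)` by
removing points and adding indices. -/
structure IsDoorOf (c : X → I) (i₀ : I) (τ : Finset X) (B : Finset I) (σ : Finset X) : Prop
    extends IsDoor c i₀ σ where
  subset : σ ⊆ τ
  subset_insert_image : B ⊆ insert i₀ (σ.image c)

section Doors

variable {c : X → I} {i₀ : I}

lemma IsDoor.card_insert_image (h : IsDoor c i₀ σ) : #(insert i₀ (σ.image c)) = #σ + 1 := by
  rw [card_insert_of_notMem h.notMem, card_image_of_injOn h.injOn]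

section Erase

variable [DecidableEq X]

lemma IsDoor.exists_erase (hτ : IsDoor c i₀ τ) (hB : B ⊆ insert i₀ (τ.image c))
    (hcard : #τ = #B) (hne : τ.image c ≠ B) :
    ∃ x ∈ τ, IsDoor c i₀ (τ.erase x) ∧ B = insert i₀ ((τ.erase x).image c) := by
  have hcimage := card_image_of_injOn hτ.injOn
  have hi₀ : i₀ ∈ B := by
    by_contra hi₀
    refine hne (eq_of_subset_of_card_le ?_ (by omega)).symm
    exact (subset_insert_iff_of_notMem hi₀).1 hB
  obtain ⟨i, hi, hins⟩ := exists_eq_insert_iff.2 ⟨subset_insert_iff.1 hB,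
    by rw [card_erase_add_one hi₀, hcimage, hcard]⟩
  obtain ⟨x, hx, rfl⟩ := mem_image.1 (hins ▸ mem_insert_self i (B.erase i₀))
  have hsub : τ.erase x ⊆ τ := erase_subset x τ
  have herase : (τ.erase x).image c = B.erase i₀ := by
    have hcx : c x ∉ (τ.erase x).image c := by
      rw [mem_image]
      rintro ⟨y, hy, hyx⟩
      exact ne_of_mem_erase hy (hτ.injOn (mem_of_mem_erase hy) hx hyx)
    rw [← erase_insert hi, hins, ← erase_insert hcx, ← image_insert, insert_erase hx]
  exact ⟨x, hx, ⟨hτ.injOn.mono (coe_subset.2 hsub), fun h => hτ.notMem (image_subset_image hsub h)⟩,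
    by rw [herase, insert_erase hi₀]⟩

lemma IsDoorOf.eq_or_eq_erase (hσ : IsDoorOf c i₀ τ B σ) (hcard : #τ = #B) :
    σ = τ ∨ ∃ x ∈ τ, σ = τ.erase x ∧ B = insert i₀ (σ.image c) := by
  refine or_iff_not_imp_left.2 fun hne => ?_
  have hlt := card_lt_card (hσ.subset.ssubset_of_ne hne)
  have hle := card_le_card hσ.subset_insert_image
  rw [hσ.card_insert_image] at hle
  obtain ⟨x, hx, rfl⟩ := exists_eq_insert_iff.2 ⟨hσ.subset, by omega⟩
  exact ⟨x, mem_insert_self x σ, (erase_insert hx).symm,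
    eq_of_subset_of_card_le hσ.subset_insert_image (by rw [hσ.card_insert_image]; omega)⟩

lemma IsDoor.map_eq_of_erase {x y : X} (hx : IsDoor c i₀ (τ.erase x)) (hy : IsDoor c i₀ (τ.erase y))
    (hxτ : x ∈ τ) (hxy : insert i₀ ((τ.erase x).image c) = insert i₀ ((τ.erase y).image c)) :
    c y = c x := by
  obtain rfl | hne := eq_or_ne x y
  · rfl
  have himage : (τ.erase x).image c = (τ.erase y).image c := by
    rw [← erase_insert hx.notMem, hxy, erase_insert hy.notMem]
  have hxy : x ∈ τ.erase y := mem_erase.2 ⟨hne, hxτ⟩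
  obtain ⟨z, hz, hzx⟩ := mem_image.1 (himage ▸ mem_image_of_mem c hxy)
  obtain rfl : z = y := by
    by_contra hzy
    exact ne_of_mem_erase hz (hy.injOn (mem_erase.2 ⟨hzy, mem_of_mem_erase hz⟩) hxy hzx)
  exact hzx

lemma image_erase_eq_of_map_eq {x y : X} (hx : x ∈ τ) (hy : y ∈ τ) (hxy : c y = c x) :
    (τ.erase y).image c = (τ.erase x).image c := by
  ext i
  simp only [mem_image, mem_erase]
  constructor
  · rintro ⟨z, ⟨hzy, hz⟩, rfl⟩
    by_cases hzx : z = x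
    · exact ⟨y, ⟨hzx ▸ hzy.symm, hy⟩, hzx ▸ hxy⟩
    · exact ⟨z, ⟨hzx, hz⟩, rfl⟩
  · rintro ⟨z, ⟨hzx, hz⟩, rfl⟩
    by_cases hzy : z = y
    · exact ⟨x, ⟨hzy ▸ hzx.symm, hx⟩, hzy ▸ hxy.symm⟩
    · exact ⟨z, ⟨hzy, hz⟩, rfl⟩

lemma IsDoor.erase_of_map_eq {x y : X} (h : IsDoor c i₀ (τ.erase x)) (hx : x ∈ τ) (hy : y ∈ τ)
    (hxy : c y = c x) : IsDoor c i₀ (τ.erase y) := by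
  have himage := image_erase_eq_of_map_eq hx hy hxy
  refine ⟨injOn_of_card_image_eq ?_, himage ▸ h.notMem⟩
  rw [himage, card_image_of_injOn h.injOn, card_erase_of_mem hx, card_erase_of_mem hy]

lemma IsDoor.of_erase {x : X} (h : IsDoor c i₀ (τ.erase x)) (hx : c x ≠ i₀)
    (hinj : ∀ y ∈ τ, c y = c x → y = x) : IsDoor c i₀ τ := by
  refine ⟨fun y hy z hz hyz => ?_, ?_⟩
  · by_cases hyx : y = x
    · exact hyx.trans (hinj z hz (hyz.symm.trans (hyx ▸ rfl))).symm
    by_cases hzx : z = x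
    · exact absurd (hinj y hy (hyz.trans (hzx ▸ rfl))) hyx
    exact h.injOn (mem_erase.2 ⟨hyx, hy⟩) (mem_erase.2 ⟨hzx, hz⟩) hyz
  · rw [mem_image]
    rintro ⟨y, hy, rfl⟩
    have hyx : y ≠ x := fun hyx => hx (hyx ▸ rfl)
    exact h.notMem (mem_image_of_mem c (mem_erase.2 ⟨hyx, hy⟩))

lemma IsDoorOf.eq_or_exists_map_eq {x : X} (hσ : IsDoorOf c i₀ τ B σ)
    (hx : IsDoor c i₀ (τ.erase x)) (hxτ : x ∈ τ) (hcard : #τ = #B)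
    (hB : B = insert i₀ ((τ.erase x).image c)) :
    σ = τ ∨ ∃ y ∈ τ, c y = c x ∧ σ = τ.erase y := by
  refine (hσ.eq_or_eq_erase hcard).imp_right ?_
  rintro ⟨y, hy, rfl, hBy⟩
  exact ⟨y, hy, hx.map_eq_of_erase hσ.toIsDoor hxτ (hB.symm.trans hBy), rfl⟩

open Classical in
lemma IsDoor.card_isDoorOf_of_unique [Fintype X] {x : X} (hx : IsDoor c i₀ (τ.erase x))
    (hxτ : x ∈ τ) (hcx : c x ≠ i₀) (hcard : #τ = #B) (hB : B = insert i₀ ((τ.erase x).image c))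
    (hinj : ∀ y ∈ τ, c y = c x → y = x) : #{σ | IsDoorOf c i₀ τ B σ} = 2 := by
  refine Finset.card_eq_two.2 ⟨τ, τ.erase x, (erase_ssubset hxτ).ne', ext fun σ => ?_⟩
  simp only [mem_filter, mem_univ, true_and, mem_insert, mem_singleton]
  constructor
  · intro hσ
    refine (hσ.eq_or_exists_map_eq hx hxτ hcard hB).imp_right ?_
    rintro ⟨y, hy, hyx, rfl⟩
    rw [hinj y hy hyx]
  · rintro (rfl | rfl)
    · refine ⟨hx.of_erase hcx hinj, subset_rfl, ?_⟩
      exact hB ▸ insert_subset_insert i₀ (image_subset_image (erase_subset x σ))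
    · exact ⟨hx, erase_subset x τ, hB.le⟩

open Classical in
lemma IsDoor.card_isDoorOf_of_ne [Fintype X] {x y : X} (hx : IsDoor c i₀ (τ.erase x))
    (hxτ : x ∈ τ) (hcard : #τ = #B) (hB : B = insert i₀ ((τ.erase x).image c))
    (hyτ : y ∈ τ) (hyx : c y = c x) (hne : y ≠ x) : #{σ | IsDoorOf c i₀ τ B σ} = 2 := by
  have hxy : x ∈ τ.erase y := mem_erase.2 ⟨hne.symm, hxτ⟩
  refine Finset.card_eq_two.2 ⟨τ.erase x, τ.erase y, fun h => notMem_erase x τ (h ▸ hxy),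
    ext fun σ => ?_⟩
  simp only [mem_filter, mem_univ, true_and, mem_insert, mem_singleton]
  constructor
  · intro hσ
    obtain rfl | ⟨z, hz, hzx, rfl⟩ := hσ.eq_or_exists_map_eq hx hxτ hcard hB
    · exact absurd (hσ.injOn hyτ hxτ hyx) hne
    · by_cases hzx' : z = x
      · exact .inl (hzx' ▸ rfl)
      · have hzy : z = y := hx.injOn (mem_erase.2 ⟨hzx', hz⟩) (mem_erase.2 ⟨hne, hyτ⟩)
          (hzx.trans hyx.symm)
        exact .inr (hzy ▸ rfl)
  · rintro (rfl | rfl)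
    · exact ⟨hx, erase_subset x τ, hB.le⟩
    · refine ⟨hx.erase_of_map_eq hxτ hyτ hyx, erase_subset y τ, ?_⟩
      rw [image_erase_eq_of_map_eq hxτ hyτ hyx, hB]

end Erase

open Classical in
lemma even_card_isDoorOf [Fintype X] (hcard : #τ = #B) (hne : τ.image c ≠ B) :
    Even #{σ | IsDoorOf c i₀ τ B σ} := by
  obtain hempty | ⟨σ, hmem⟩ := eq_empty_or_nonempty {σ | IsDoorOf c i₀ τ B σ}
  · rw [hempty]
    exact Even.zero
  have hσ : IsDoorOf c i₀ τ B σ := (mem_filter.1 hmem).2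
  obtain ⟨x, hxτ, hx, hB⟩ : ∃ x ∈ τ, IsDoor c i₀ (τ.erase x) ∧
      B = insert i₀ ((τ.erase x).image c) := by
    obtain rfl | ⟨x, hx, rfl, hB⟩ := hσ.eq_or_eq_erase hcard
    · exact hσ.exists_erase hσ.subset_insert_image hcard hne
    · exact ⟨x, hx, hσ.toIsDoor, hB⟩
  have hcx : c x ≠ i₀ := by
    rintro rfl
    exact hne (by rw [hB, ← image_insert, insert_erase hxτ])
  suffices #{σ | IsDoorOf c i₀ τ B σ} = 2 from this ▸ even_two
  by_cases hinj : ∀ y ∈ τ, c y = c x → y = x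
  · exact hx.card_isDoorOf_of_unique hxτ hcx hcard hB hinj
  · push Not at hinj
    obtain ⟨y, hyτ, hyx, hne⟩ := hinj
    exact hx.card_isDoorOf_of_ne hxτ hcard hB hyτ hyx hne

end Doors

-- Incidences of doors and rooms are counted twice: the door `∅` meets a single room and the other
-- doors none or two, whereas a room `(τ, B)` with `τ.image c ≠ B` meets an even number of doors.
theorem exists_isDominant_image [Finite X] [Nonempty X] [Finite I]
    (hr : ∀ i, Function.Injective (r i)) (c : X → I) : ∃ τ, IsDominant r τ (τ.image c) := by
  classical
  cases nonempty_fintype X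
  cases nonempty_fintype I
  by_contra! hc
  let i₀ := c (Classical.arbitrary X)
  let rooms : Finset (Finset X × Finset I) := {R | IsRoom r R}
  let doors : Finset (Finset X) := {σ | IsDoor c i₀ σ}
  let Meets (R : Finset X × Finset I) (σ : Finset X) : Prop :=
    σ ⊆ R.1 ∧ R.2 ⊆ insert i₀ (σ.image c)
  have heven : Even (∑ R ∈ rooms, #(bipartiteAbove Meets doors R)) := by
    refine Finset.even_sum _ fun R hR => ?_
    have hR : IsRoom r R := (mem_filter.1 hR).2
    have hdoors : bipartiteAbove Meets doors R =
        ({σ | IsDoorOf c i₀ R.1 R.2 σ} : Finset (Finset X)) := by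
      ext σ
      simp only [bipartiteAbove, doors, Meets, mem_filter, mem_univ, true_and]
      exact ⟨fun h => ⟨h.1, h.2.1, h.2.2⟩, fun h => ⟨h.1, h.2, h.3⟩⟩
    rw [hdoors]
    exact even_card_isDoorOf hR.card_eq fun h => hc R.1 (h ▸ hR.isDominant)
  have hdegree (σ : Finset X) : bipartiteBelow Meets rooms σ =
      ({R | IsRoomAt r σ (insert i₀ (σ.image c)) R} : Finset (Finset X × Finset I)) := by
    ext R
    simp only [bipartiteBelow, rooms, Meets, mem_filter, mem_univ, true_and]
    exact ⟨fun h => ⟨h.1, h.2.1, h.2.2⟩, fun h => ⟨h.1, h.2, h.3⟩⟩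
  have hdoor_even : ∀ σ ∈ doors.erase ∅, Even #(bipartiteBelow Meets rooms σ) := by
    intro σ hσ
    have hdoor := (mem_filter.1 (mem_of_mem_erase hσ)).2
    rw [hdegree]
    exact even_card_isRoomAt hr (nonempty_iff_ne_empty.2 (ne_of_mem_erase hσ))
      hdoor.card_insert_image
  have hempty : ∅ ∈ doors := by
    refine mem_filter.2 ⟨mem_univ _, ?_, ?_⟩ <;> simp
  rw [sum_card_bipartiteAbove_eq_sum_card_bipartiteBelow, ← add_sum_erase _ _ hempty, hdegree,
    image_empty, insert_empty, card_isRoomAt_empty_singleton i₀ (hr i₀), add_comm,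
    Nat.even_add_one] at heven
  exact heven (Finset.even_sum _ hdoor_even)

end Scarf

section Grid

open Finset

variable {ι : Type*} [Fintype ι]

lemma apply_le_add_card_of_sum_le {b x : ι → ℕ} (hbx : b ≤ x)
    (hsum : ∑ i, x i ≤ ∑ i, b i + Fintype.card ι) (i : ι) : x i ≤ b i + Fintype.card ι := by
  classical
  have hx := add_sum_erase univ x (mem_univ i)
  have hb := add_sum_erase univ b (mem_univ i)
  have hle : ∑ j ∈ univ.erase i, b j ≤ ∑ j ∈ univ.erase i, x j := sum_le_sum fun j _ => hbx j
  omega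

lemma exists_sum_eq_of_sum_le [Nonempty ι] {N : ℕ} {C : Finset ι} {b : ι → ℕ}
    (hb : ∑ i ∈ C, b i ≤ N) : ∃ y : ι → ℕ, ∑ i, y i = N ∧ ∀ i ∈ C, b i ≤ y i := by
  classical
  let i₀ := Classical.arbitrary ι
  refine ⟨fun i => (if i ∈ C then b i else 0) + if i = i₀ then N - ∑ i ∈ C, b i else 0, ?_, ?_⟩
  · rw [sum_add_distrib, sum_ite_mem, sum_ite_eq' univ i₀, if_pos (mem_univ _), univ_inter]
    omega
  · intro i hi
    simp only [hi, if_true, Nat.le_add_right]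

lemma exists_dominant_grid_cell [DecidableEq ι] [Nonempty ι] (N : ℕ) (c : (ι → ℕ) → ι) :
    ∃ (b : ι → ℕ) (τ : Finset (ι → ℕ)), τ.Nonempty ∧
      (∀ x ∈ τ, ∑ i, x i = N ∧ ∀ i ∈ τ.image c, b i ≤ x i) ∧
      ∀ y : ι → ℕ, ∑ i, y i = N → ∃ i ∈ τ.image c, y i ≤ b i := by
  let X := piAntidiag (univ : Finset ι) N
  have hX {x : ι → ℕ} : x ∈ X ↔ ∑ i, x i = N := by simp [X, mem_piAntidiag]
  have : Nonempty X := ⟨⟨Pi.single (Classical.arbitrary ι) N, hX.2 (by simp)⟩⟩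
  -- Ties between grid points with equal coordinates are broken by a fixed enumeration.
  let r : ι → X → ℕ ×ₗ Fin (Fintype.card X) := fun i x => toLex (x.1 i, Fintype.equivFin X x)
  have hr (i : ι) : Function.Injective (r i) := fun x y h =>
    (Fintype.equivFin X).injective (congrArg (fun z => (ofLex z).2) h)
  have r_le {i : ι} {x y : X} (h : r i x ≤ r i y) : x.1 i ≤ y.1 i := Prod.Lex.monotone_fst _ _ h
  obtain ⟨τ, hτ⟩ := exists_isDominant_image hr (fun x => c x.1)
  have hne : τ.Nonempty := by
    obtain ⟨i, hi, -⟩ := hτ (Classical.arbitrary X)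
    exact image_nonempty.1 ⟨i, hi⟩
  obtain ⟨a, ha⟩ := exists_isMinSelection r (τ.image fun x => c x.1) hne
  refine ⟨fun i => (a i).1 i, τ.image Subtype.val, hne.image _, forall_mem_image.2 fun x hx => ?_,
    fun y hy => ?_⟩ <;> rw [image_image]
  · exact ⟨hX.1 x.2, fun i hi => r_le ((ha i hi).2 x hx)⟩
  · obtain ⟨i, hi, hyi⟩ := hτ ⟨y, hX.2 hy⟩
    exact ⟨i, hi, r_le (hyi (a i) (ha i hi).1)⟩

lemma exists_grid_cell [DecidableEq ι] [Nonempty ι] (N : ℕ) (c : (ι → ℕ) → ι) :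
    ∃ (b : ι → ℕ) (τ : Finset (ι → ℕ)), τ.Nonempty ∧
      (∀ x ∈ τ, ∑ i, x i = N ∧ ∀ i, b i ≤ x i ∧ x i ≤ b i + Fintype.card ι) ∧
      ∀ i ∉ τ.image c, b i = 0 := by
  obtain ⟨a, τ, hne, hτ, hdom⟩ := exists_dominant_grid_cell N c
  let b : ι → ℕ := fun i => if i ∈ τ.image c then a i else 0
  have hbx : ∀ x ∈ τ, b ≤ x := fun x hx i => by
    by_cases hi : i ∈ τ.image c
    · exact (if_pos hi).trans_le ((hτ x hx).2 i hi)
    · exact (if_neg hi).trans_le (Nat.zero_le _)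
  have hsum : N < ∑ i ∈ τ.image c, (a i + 1) := by
    by_contra! hle
    obtain ⟨y, hyN, hby⟩ := exists_sum_eq_of_sum_le hle
    obtain ⟨i, hi, hyi⟩ := hdom y hyN
    exact absurd (hby i hi) (by omega)
  have hN : N ≤ ∑ i, b i + Fintype.card ι := by
    have hb : ∑ i, b i = ∑ i ∈ τ.image c, a i := by rw [sum_ite_mem, univ_inter]
    have hcard := card_le_univ (τ.image c)
    rw [sum_add_distrib, sum_const, smul_eq_mul, mul_one] at hsum
    omega
  refine ⟨b, τ, hne, fun x hx => ⟨(hτ x hx).1, fun i => ⟨hbx x hx i, ?_⟩⟩, fun i hi => if_neg hi⟩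
  exact apply_le_add_card_of_sum_le (hbx x hx) ((hτ x hx).1.trans_le hN) i

end Grid

section Simplex

open Set

variable {ι : Type*} [Fintype ι]

lemma exists_small_cell_stdSimplex [Nonempty ι] [DecidableEq ι] (c : (ι → ℝ) → ι) {δ : ℝ}
    (hδ : 0 < δ) :
    ∃ τ : Finset (ι → ℝ), τ.Nonempty ∧ ↑τ ⊆ stdSimplex ℝ ι ∧ (∀ x ∈ τ, ∀ y ∈ τ, dist x y < δ) ∧
      ∀ i ∉ τ.image c, ∀ x ∈ τ, x i < δ := by
  obtain ⟨N, hN⟩ := exists_nat_gt (Fintype.card ι / δ)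
  have hN0 : (0 : ℝ) < N := lt_of_le_of_lt (by positivity) hN
  have hmesh : (Fintype.card ι : ℝ) < δ * N := (div_lt_iff₀' hδ).1 hN
  let scale : (ι → ℕ) → ι → ℝ := fun x i => x i / N
  obtain ⟨b, τ, hne, hτ, hb⟩ := exists_grid_cell N (c ∘ scale)
  have hupper : ∀ x ∈ τ, ∀ i, (x i : ℝ) ≤ b i + Fintype.card ι := fun x hx i =>
    mod_cast ((hτ x hx).2 i).2
  have hlower : ∀ x ∈ τ, ∀ i, (b i : ℝ) ≤ x i := fun x hx i => mod_cast ((hτ x hx).2 i).1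
  refine ⟨τ.image scale, hne.image scale, ?_, ?_, ?_⟩
  · simp only [Finset.coe_image, image_subset_iff]
    refine fun x hx => ⟨fun i => by positivity, ?_⟩
    rw [← Finset.sum_div, ← Nat.cast_sum, (hτ x hx).1, div_self hN0.ne']
  · refine Finset.forall_mem_image.2 fun x hx => Finset.forall_mem_image.2 fun y hy => ?_
    refine (dist_pi_lt_iff hδ).2 fun i => ?_
    rw [Real.dist_eq, ← sub_div, abs_div, abs_of_pos hN0, div_lt_iff₀ hN0, abs_lt]
    constructor <;> linarith [hupper x hx i, hlower x hx i, hupper y hy i, hlower y hy i]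
  · rw [Finset.image_image]
    refine fun i hi => Finset.forall_mem_image.2 fun x hx => (div_lt_iff₀ hN0).2 ?_
    have hx := hupper x hx i
    rw [hb i hi, Nat.cast_zero, zero_add] at hx
    exact hx.trans_lt hmesh

theorem exists_mem_stdSimplex_forall_eq_zero_or_mem [Nonempty ι] {A : ι → Set (ι → ℝ)}
    (hA : ∀ i, IsClosed (A i)) (hcover : stdSimplex ℝ ι ⊆ ⋃ i, A i) :
    ∃ x ∈ stdSimplex ℝ ι, ∀ i, x i = 0 ∨ x ∈ A i := by
  classical
  by_contra! h
  let U (i : ι) : Set (ι → ℝ) := {x | x i ≠ 0} ∩ (A i)ᶜ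
  have hU (i : ι) : IsOpen (U i) :=
    (isOpen_ne_fun (continuous_apply i) continuous_const).inter (hA i).isOpen_compl
  obtain ⟨δ, hδ, hball⟩ := lebesgue_number_lemma_of_metric (isCompact_stdSimplex ℝ ι) hU
    fun x hx => mem_iUnion.2 (h x hx)
  have hcolour (x : ι → ℝ) : ∃ i, x ∈ stdSimplex ℝ ι → x ∈ A i := by
    by_cases hx : x ∈ stdSimplex ℝ ι
    · exact (mem_iUnion.1 (hcover hx)).imp fun i hi _ => hi
    · exact ⟨Classical.arbitrary ι, fun h => absurd h hx⟩
  choose c hc using hcolour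
  obtain ⟨τ, ⟨x, hx⟩, hτ, hdist, hmissing⟩ := exists_small_cell_stdSimplex c hδ
  obtain ⟨i, hi⟩ := hball x (hτ hx)
  by_cases hcol : i ∈ τ.image c
  · obtain ⟨y, hy, rfl⟩ := Finset.mem_image.1 hcol
    exact (hi (hdist y hy x hx)).2 (hc y (hτ hy))
  · have hmem : Function.update x i 0 ∈ Metric.ball x δ := by
      refine (dist_pi_lt_iff hδ).2 fun j => ?_
      obtain rfl | hji := eq_or_ne j i
      · simpa [abs_of_nonneg ((hτ hx).1 j)] using hmissing j hcol x hx
      · simpa [hji] using hδ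
    exact (hi hmem).1 (Function.update_self i 0 x)

theorem exists_mem_stdSimplex_fixedPoint [Nonempty ι] {F : (ι → ℝ) → ι → ℝ}
    (hF : ContinuousOn F (stdSimplex ℝ ι)) (hmaps : MapsTo F (stdSimplex ℝ ι) (stdSimplex ℝ ι)) :
    ∃ x ∈ stdSimplex ℝ ι, F x = x := by
  let A (i : ι) : Set (ι → ℝ) := {x ∈ stdSimplex ℝ ι | x i ≤ F x i}
  have hA (i : ι) : IsClosed (A i) := (isClosed_stdSimplex ℝ ι).isClosed_le
    (continuous_apply i).continuousOn (continuousOn_pi.1 hF i)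
  have hsum {x : ι → ℝ} (hx : x ∈ stdSimplex ℝ ι) : ∑ i, x i = ∑ i, F x i :=
    hx.2.trans (hmaps hx).2.symm
  have hcover : stdSimplex ℝ ι ⊆ ⋃ i, A i := fun x hx => by
    obtain ⟨i, -, hi⟩ := Finset.exists_le_of_sum_le Finset.univ_nonempty (hsum hx).le
    exact mem_iUnion.2 ⟨i, hx, hi⟩
  obtain ⟨x, hx, hxA⟩ := exists_mem_stdSimplex_forall_eq_zero_or_mem hA hcover
  have hle (i : ι) : x i ≤ F x i := (hxA i).elim (fun h => h ▸ (hmaps hx).1 i) And.right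
  have heq := (Finset.sum_eq_sum_iff_of_le fun i _ => hle i).1 (hsum hx)
  exact ⟨x, hx, funext fun i => (heq i (Finset.mem_univ i)).symm⟩

end Simplex

section Equilibrium

variable {ι κ : Type*} [Fintype ι]

lemma sum_mul_le_of_le {x g : ι → ℝ} {M : ℝ} (hx : x ∈ stdSimplex ℝ ι) (hg : ∀ i, g i ≤ M) :
    ∑ i, x i * g i ≤ M :=
  calc ∑ i, x i * g i ≤ ∑ i, x i * M :=
        Finset.sum_le_sum fun i _ => mul_le_mul_of_nonneg_left (hg i) (hx.1 i)
    _ = M := by rw [← Finset.sum_mul, hx.2, one_mul]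

/-- The mixed strategy `x` is a best response to the payoff vector `g`: no pure strategy pays more
than `x` does in expectation. -/
def IsBestResponse (x g : ι → ℝ) : Prop :=
  ∀ i, g i ≤ ∑ l, x l * g l

lemma IsBestResponse.eq_of_ne_zero {x g : ι → ℝ} (h : IsBestResponse x g)
    (hx : x ∈ stdSimplex ℝ ι) {i : ι} (hi : x i ≠ 0) : g i = ∑ l, x l * g l := by
  have hsum : ∑ l, x l * g l = ∑ l, x l * ∑ l', x l' * g l' := by
    rw [← Finset.sum_mul, hx.2, one_mul]
  have hle (l : ι) : x l * g l ≤ x l * ∑ l', x l' * g l' := mul_le_mul_of_nonneg_left (h l) (hx.1 l)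
  exact mul_left_cancel₀ hi
    ((Finset.sum_eq_sum_iff_of_le fun l _ => hle l).1 hsum i (Finset.mem_univ i))

/-- Nash's improvement map for the payoff vector `g`: it shifts weight towards the pure strategies
that pay more than `x`. -/
noncomputable def nashMap (g x : ι → ℝ) (i : ι) : ℝ :=
  (x i + max 0 (g i - ∑ l, x l * g l)) / (1 + ∑ j, max 0 (g j - ∑ l, x l * g l))

lemma nashMap_mem_stdSimplex (g : ι → ℝ) {x : ι → ℝ} (hx : x ∈ stdSimplex ℝ ι) :
    nashMap g x ∈ stdSimplex ℝ ι := by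
  have hgain : 0 ≤ ∑ j, max 0 (g j - ∑ l, x l * g l) :=
    Finset.sum_nonneg fun j _ => le_max_left _ _
  refine ⟨fun i => div_nonneg (add_nonneg (hx.1 i) (le_max_left _ _)) (by linarith), ?_⟩
  simp only [nashMap]
  rw [← Finset.sum_div, Finset.sum_add_distrib, hx.2, div_self (by linarith)]

lemma isBestResponse_of_nashMap_eq {g x : ι → ℝ} (hx : x ∈ stdSimplex ℝ ι) (h : nashMap g x = x) :
    IsBestResponse x g := by
  let v := ∑ l, x l * g l
  let gain (i : ι) : ℝ := max 0 (g i - v)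
  have hgain (i : ι) : gain i = x i * ∑ j, gain j := by
    have hpos : 0 < 1 + ∑ j, gain j :=
      add_pos_of_pos_of_nonneg one_pos (Finset.sum_nonneg fun j _ => le_max_left _ _)
    have hi : x i + gain i = x i * (1 + ∑ j, gain j) := (div_eq_iff hpos.ne').1 (congrFun h i)
    linarith
  have hcentred : ∑ i, x i * (g i - v) = 0 := by
    simp only [mul_sub, Finset.sum_sub_distrib, ← Finset.sum_mul, hx.2, one_mul, sub_self, v]
  have hsq (i : ι) : gain i * gain i = (∑ j, gain j) * (x i * (g i - v)) := by
    have hmul : gain i * gain i = gain i * (g i - v) := by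
      obtain hi | hi := max_cases 0 (g i - v) <;> simp [gain, hi.1]
    rw [hmul, hgain i]
    ring
  have hzero : ∑ i, gain i * gain i = 0 := by
    simp only [hsq, ← Finset.mul_sum, hcentred, mul_zero]
  intro i
  have hi := (Finset.sum_eq_zero_iff_of_nonneg fun i _ => mul_self_nonneg (gain i)).1 hzero i
    (Finset.mem_univ i)
  exact sub_nonpos.1 ((le_max_right _ _).trans_eq (mul_self_eq_zero.1 hi))

lemma exists_isBestResponse [Nonempty ι] {g : (ι → ℝ) → ι → ℝ}
    (hg : ContinuousOn g (stdSimplex ℝ ι)) : ∃ x ∈ stdSimplex ℝ ι, IsBestResponse x (g x) := by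
  have hcont : ContinuousOn (fun x => nashMap (g x) x) (stdSimplex ℝ ι) := by
    have (i : ι) : ContinuousOn (fun x => max 0 (g x i - ∑ l, x l * g x l))
        (stdSimplex ℝ ι) := by fun_prop
    refine continuousOn_pi.2 fun i => ContinuousOn.div (by fun_prop) (by fun_prop) fun x _ => ?_
    exact (add_pos_of_pos_of_nonneg one_pos (Finset.sum_nonneg fun j _ => le_max_left _ _)).ne'
  obtain ⟨x, hx, hfix⟩ := exists_mem_stdSimplex_fixedPoint hcont
    fun x hx => nashMap_mem_stdSimplex (g x) hx
  exact ⟨x, hx, isBestResponse_of_nashMap_eq hx hfix⟩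

/-- The marginal on `κ` of a weight on `ι × κ`. -/
def marginalSnd (z : ι × κ → ℝ) (j : κ) : ℝ :=
  ∑ i, z (i, j)

lemma continuous_marginalSnd : Continuous (marginalSnd : (ι × κ → ℝ) → κ → ℝ) := by
  unfold marginalSnd
  fun_prop

/-- The marginal on `κ` of a weight on `κ × ι`. -/
def marginalFst (z : κ × ι → ℝ) (j : κ) : ℝ :=
  ∑ i, z (j, i)

lemma continuous_marginalFst : Continuous (marginalFst : (κ × ι → ℝ) → κ → ℝ) := by
  unfold marginalFst
  fun_prop

variable [Fintype κ]

lemma marginalFst_mem_stdSimplex {z : ι × κ → ℝ} (hz : z ∈ stdSimplex ℝ (ι × κ)) :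
    marginalFst z ∈ stdSimplex ℝ ι :=
  ⟨fun i => Finset.sum_nonneg fun j _ => hz.1 (i, j), by
    rw [← hz.2, Fintype.sum_prod_type]
    rfl⟩

lemma marginalSnd_mem_stdSimplex {z : ι × κ → ℝ} (hz : z ∈ stdSimplex ℝ (ι × κ)) :
    marginalSnd z ∈ stdSimplex ℝ κ :=
  ⟨fun j => Finset.sum_nonneg fun i _ => hz.1 (i, j), by
    rw [← hz.2, Fintype.sum_prod_type_right]
    rfl⟩

lemma sum_mul_add_eq_sum_marginal (z : ι × κ → ℝ) (g : ι → ℝ) (h : κ → ℝ) :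
    ∑ l, z l * (g l.1 + h l.2) = ∑ i, marginalFst z i * g i + ∑ j, marginalSnd z j * h j := by
  simp only [mul_add, Finset.sum_add_distrib, marginalFst, marginalSnd, Finset.sum_mul]
  rw [Fintype.sum_prod_type, Fintype.sum_prod_type_right]

lemma IsBestResponse.marginal {z : ι × κ → ℝ} {g : ι → ℝ} {h : κ → ℝ}
    (hz : z ∈ stdSimplex ℝ (ι × κ)) (hbest : IsBestResponse z fun l => g l.1 + h l.2) :
    IsBestResponse (marginalFst z) g ∧ IsBestResponse (marginalSnd z) h := by
  have hle (i : ι) (j : κ) :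
      g i + h j ≤ ∑ i, marginalFst z i * g i + ∑ j, marginalSnd z j * h j :=
    (hbest (i, j)).trans_eq (sum_mul_add_eq_sum_marginal z g h)
  constructor
  · intro i
    have havg := sum_mul_le_of_le (marginalSnd_mem_stdSimplex hz)
      fun j => le_sub_iff_add_le'.2 (hle i j)
    linarith
  · intro j
    have havg := sum_mul_le_of_le (marginalFst_mem_stdSimplex hz)
      fun i => le_sub_iff_add_le.2 (hle i j)
    linarith

-- A single maximizer of the separable payoff `g i + h j` over `ι × κ` replaces the product of two
-- simplices: its marginals are best responses.
theorem exists_isBestResponse_pair [Nonempty ι] [Nonempty κ]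
    {g : (ι → ℝ) × (κ → ℝ) → ι → ℝ} {h : (ι → ℝ) × (κ → ℝ) → κ → ℝ}
    (hg : ContinuousOn g (stdSimplex ℝ ι ×ˢ stdSimplex ℝ κ))
    (hh : ContinuousOn h (stdSimplex ℝ ι ×ˢ stdSimplex ℝ κ)) :
    ∃ x ∈ stdSimplex ℝ ι, ∃ y ∈ stdSimplex ℝ κ,
      IsBestResponse x (g (x, y)) ∧ IsBestResponse y (h (x, y)) := by
  let marginals (z : ι × κ → ℝ) := (marginalFst z, marginalSnd z)
  have hmaps : Set.MapsTo marginals (stdSimplex ℝ (ι × κ)) (stdSimplex ℝ ι ×ˢ stdSimplex ℝ κ) :=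
    fun z hz => ⟨marginalFst_mem_stdSimplex hz, marginalSnd_mem_stdSimplex hz⟩
  have hcont : Continuous marginals := continuous_marginalFst.prodMk continuous_marginalSnd
  have hg' := continuousOn_pi.1 (hg.comp hcont.continuousOn hmaps)
  have hh' := continuousOn_pi.1 (hh.comp hcont.continuousOn hmaps)
  obtain ⟨z, hz, hbest⟩ := exists_isBestResponse
    (g := fun z l => g (marginals z) l.1 + h (marginals z) l.2)
    (continuousOn_pi.2 fun l => (hg' l.1).add (hh' l.2))
  exact ⟨_, marginalFst_mem_stdSimplex hz, _, marginalSnd_mem_stdSimplex hz,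
    IsBestResponse.marginal hz hbest⟩

end Equilibrium

section PeriodicPermutation

open Function

lemma nonempty_periodicPts {α : Type*} [Finite α] [Nonempty α] (f : α → α) :
    (periodicPts f).Nonempty := by
  let a := Classical.arbitrary α
  obtain ⟨m, n, hne, heq⟩ := Finite.exists_ne_map_eq_of_infinite fun n => f^[n] a
  wlog hmn : m < n generalizing m n
  · exact this n m hne.symm heq.symm (hne.lt_or_gt.resolve_left hmn)
  refine ⟨f^[m] a, mk_mem_periodicPts (Nat.sub_pos_of_lt hmn) ?_⟩
  rw [IsPeriodicPt, IsFixedPt, ← iterate_add_apply, Nat.sub_add_cancel hmn.le]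
  exact heq.symm

lemma exists_perm_eqOn_periodicPts {α : Type*} (f : α → α) :
    ∃ σ : Equiv.Perm α, Set.EqOn σ f (periodicPts f) ∧ ∀ a ∉ periodicPts f, σ a = a := by
  classical
  let σ : Equiv.Perm (periodicPts f) := (bijOn_periodicPts f).equiv f
  refine ⟨Equiv.Perm.ofSubtype σ, fun a ha => ?_, fun a ha => ?_⟩
  · rw [Equiv.Perm.ofSubtype_apply_of_mem σ ha]
    rfl
  · exact Equiv.Perm.ofSubtype_apply_of_not_mem σ ha

-- If the best payoff `M` were positive, every `i` in the support of the first marginal would have a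
-- partner `f i` with `e (i, f i) = M`, and the cycles of `f` would form a permutation of positive
-- value.
lemma nonpos_of_isBestResponse_of_forall_perm {ι : Type*} [Fintype ι] {y e : ι × ι → ℝ}
    (hy : y ∈ stdSimplex ℝ (ι × ι)) (hbest : IsBestResponse y e) (hdiag : ∀ i, e (i, i) = 0)
    (hperm : ∀ σ : Equiv.Perm ι, ∑ i, marginalFst y i * e (i, σ i) ≤ 0) (l : ι × ι) : e l ≤ 0 := by
  classical
  let M := ∑ l, y l * e l
  let x := marginalFst y
  have hx : x ∈ stdSimplex ℝ ι := marginalFst_mem_stdSimplex hy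
  refine (hbest l).trans (not_lt.1 fun hM : 0 < M => ?_)
  obtain ⟨i₀, -, hi₀⟩ := Finset.exists_ne_zero_of_sum_ne_zero (hx.2.trans_ne one_ne_zero)
  have hpartner (i : ι) : ∃ h, (x i ≠ 0 → e (i, h) = M) ∧ (x i = 0 → h = i₀) := by
    by_cases hi : x i = 0
    · exact ⟨i₀, absurd hi, fun _ => rfl⟩
    · obtain ⟨h, -, hh⟩ := Finset.exists_ne_zero_of_sum_ne_zero hi
      exact ⟨h, fun _ => hbest.eq_of_ne_zero hy hh, fun h0 => absurd h0 hi⟩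
  choose f hfM hf₀ using hpartner
  obtain ⟨a, ha, hxa⟩ : ∃ a ∈ periodicPts f, x a ≠ 0 := by
    have : Nonempty ι := ⟨i₀⟩
    obtain ⟨a, ha⟩ := nonempty_periodicPts f
    by_cases hxa : x a = 0
    · exact ⟨i₀, hf₀ a hxa ▸ (bijOn_periodicPts f).mapsTo ha, hi₀⟩
    · exact ⟨a, ha, hxa⟩
  obtain ⟨σ, hσf, hσ⟩ := exists_perm_eqOn_periodicPts f
  have hσM {i : ι} (hi : i ∈ periodicPts f) (hxi : x i ≠ 0) : e (i, σ i) = M := by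
    rw [hσf hi, hfM i hxi]
  have hterm (i : ι) : 0 ≤ x i * e (i, σ i) := by
    by_cases hi : i ∈ periodicPts f
    · by_cases hxi : x i = 0
      · rw [hxi, zero_mul]
      · exact mul_nonneg (hx.1 i) ((hσM hi hxi).symm ▸ hM.le)
    · rw [hσ i hi, hdiag, mul_zero]
  refine (hperm σ).not_gt (Finset.sum_pos' (fun i _ => hterm i) ⟨a, Finset.mem_univ a, ?_⟩)
  exact mul_pos ((hx.1 a).lt_of_ne' hxa) ((hσM ha hxa).symm ▸ hM)

end PeriodicPermutation

section FairDivision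

open Filter Topology

variable {ι κ β : Type*} {A : κ → ι → β} {u : ι → β → ℝ}

/-- The swappable allocation sets: the bundles of any two players can be exchanged within the set.
The set is given as a family `A` indexed by `κ`, where `A j i` is the bundle of player `i`. -/
def IsSwappable (A : κ → ι → β) : Prop :=
  ∀ j g h, ∃ l, (∀ i, i ≠ g → i ≠ h → A l i = A j i) ∧ A l g = A j h ∧ A l h = A j g

lemma IsSwappable.exists_eq_comp_perm [Finite ι] (hA : IsSwappable A) (σ : Equiv.Perm ι) (j : κ) :
    ∃ l, ∀ i, A l i = A j (σ i) := by
  classical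
  induction σ using Equiv.Perm.swap_induction_on generalizing j with
  | one => exact ⟨j, fun i => rfl⟩
  | swap_mul σ g h _ ih =>
    obtain ⟨l, hother, hg, hh⟩ := hA j g h
    have hl (i : ι) : A l i = A j (Equiv.swap g h i) := by
      by_cases hig : i = g
      · rw [hig, hg, Equiv.swap_apply_left]
      by_cases hih : i = h
      · rw [hih, hh, Equiv.swap_apply_right]
      rw [hother i hig hih, Equiv.swap_apply_of_ne_of_ne hig hih]
    obtain ⟨l', hl'⟩ := ih l
    exact ⟨l', fun i => (hl' i).trans (hl (σ i))⟩

section Welfare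

variable [Fintype ι]

/-- The utilitarian welfare of the allocation `j` for the weights `w`. -/
def welfare (A : κ → ι → β) (u : ι → β → ℝ) (w : ι → ℝ) (j : κ) : ℝ :=
  ∑ i, w i * u i (A j i)

lemma continuous_welfare : Continuous (welfare A u) := by
  unfold welfare
  fun_prop

end Welfare

lemma exists_pos_forall_mul_le [Finite κ] {p q : κ → ℝ} (hq : ∀ j, 0 ≤ q j)
    (hpq : ∀ j, q j = 0 → p j = 0) : ∃ t > 0, ∀ j, t * p j ≤ q j := by
  have hsmall : ∀ᶠ t : ℝ in 𝓝[>] 0, ∀ j, t * p j ≤ q j := by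
    refine eventually_all.2 fun j => ?_
    obtain hj | hj := (hq j).eq_or_lt
    · exact .of_forall fun t => by rw [hpq j hj.symm, mul_zero, hj]
    · have htend : Tendsto (fun t : ℝ => t * p j) (𝓝[>] 0) (𝓝 (0 * p j)) :=
        (tendsto_id.mul_const _).mono_left nhdsWithin_le_nhds
      exact htend.eventually_le_const (by rwa [zero_mul])
  exact (eventually_mem_nhdsWithin.and hsmall).exists

variable [Fintype κ] {p q : κ → ℝ}

/-- The expected utility for player `i` of the bundle that the mixed allocation `p` assigns to
player `h`. -/
def expectedUtility (A : κ → ι → β) (u : ι → β → ℝ) (p : κ → ℝ) (i h : ι) : ℝ :=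
  ∑ j, p j * u i (A j h)

/-- Pareto efficiency among mixed allocations. -/
def IsParetoEfficient (A : κ → ι → β) (u : ι → β → ℝ) (p : κ → ℝ) : Prop :=
  ¬ ∃ q ∈ stdSimplex ℝ κ, (∀ i, expectedUtility A u p i i ≤ expectedUtility A u q i i) ∧
    ∃ i, expectedUtility A u p i i < expectedUtility A u q i i

/-- The envy of player `l.1` towards player `l.2` under the mixed allocation `p`. -/
def envy (A : κ → ι → β) (u : ι → β → ℝ) (p : κ → ℝ) (l : ι × ι) : ℝ :=
  expectedUtility A u p l.1 l.2 - expectedUtility A u p l.1 l.1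

/-- Envy-freeness of a mixed allocation. -/
def IsEnvyFree (A : κ → ι → β) (u : ι → β → ℝ) (p : κ → ℝ) : Prop :=
  ∀ i h, expectedUtility A u p i h ≤ expectedUtility A u p i i

lemma continuous_envy : Continuous (envy A u) := by
  unfold envy expectedUtility
  fun_prop

lemma expectedUtility_add_smul_sub (p q r : κ → ℝ) (t : ℝ) (i h : ι) :
    expectedUtility A u (r + t • (q - p)) i h = expectedUtility A u r i h +
      t * (expectedUtility A u q i h - expectedUtility A u p i h) := by
  simp only [expectedUtility, Pi.add_apply, Pi.smul_apply, Pi.sub_apply, smul_eq_mul, add_mul,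
    mul_assoc, sub_mul, Finset.sum_add_distrib, ← Finset.mul_sum, Finset.sum_sub_distrib]

lemma IsParetoEfficient.of_support_subset (hPE : IsParetoEfficient A u q) (hq : q ∈ stdSimplex ℝ κ)
    (hp : p ∈ stdSimplex ℝ κ) (hpq : ∀ j, q j = 0 → p j = 0) : IsParetoEfficient A u p := by
  rintro ⟨r, hr, hle, i, hlt⟩
  obtain ⟨t, ht, htq⟩ := exists_pos_forall_mul_le hq.1 hpq
  refine hPE ⟨q + t • (r - p), ⟨fun j => ?_, ?_⟩, fun i => ?_, i, ?_⟩
  · have hrj := mul_nonneg ht.le (hr.1 j)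
    have hj : (q + t • (r - p)) j = (q j - t * p j) + t * r j := by
      simp only [Pi.add_apply, Pi.smul_apply, Pi.sub_apply, smul_eq_mul]
      ring
    linarith [htq j]
  · simp [Finset.sum_add_distrib, ← Finset.mul_sum, hp.2, hq.2, hr.2]
  · rw [expectedUtility_add_smul_sub]
    exact le_add_of_nonneg_right (mul_nonneg ht.le (sub_nonneg.2 (hle i)))
  · rw [expectedUtility_add_smul_sub]
    exact lt_add_of_pos_right _ (mul_pos ht (sub_pos.2 hlt))

variable [Fintype ι] {w : ι → ℝ}

lemma sum_mul_welfare (q : κ → ℝ) (w : ι → ℝ) :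
    ∑ j, q j * welfare A u w j = ∑ i, w i * expectedUtility A u q i i := by
  simp only [welfare, expectedUtility, Finset.mul_sum]
  rw [Finset.sum_comm]
  exact Finset.sum_congr rfl fun i _ => Finset.sum_congr rfl fun j _ => by ring

lemma IsBestResponse.isParetoEfficient (hp : IsBestResponse p (welfare A u w)) (hw : ∀ i, 0 < w i) :
    IsParetoEfficient A u p := by
  rintro ⟨q, hq, hle, i, hlt⟩
  have hwelfare := sum_mul_le_of_le hq hp
  simp only [sum_mul_welfare] at hwelfare
  refine hwelfare.not_gt (Finset.sum_lt_sum ?_ ⟨i, Finset.mem_univ i, ?_⟩)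
  · exact fun i _ => mul_le_mul_of_nonneg_left (hle i) (hw i).le
  · exact mul_lt_mul_of_pos_left hlt (hw i)

lemma IsSwappable.sum_mul_envy_nonpos (hA : IsSwappable A) (hp : p ∈ stdSimplex ℝ κ)
    (hbest : IsBestResponse p (welfare A u w)) (σ : Equiv.Perm ι) :
    ∑ i, w i * envy A u p (i, σ i) ≤ 0 := by
  choose l hl using hA.exists_eq_comp_perm σ
  have hpermuted : ∑ i, w i * expectedUtility A u p i (σ i) = ∑ j, p j * welfare A u w (l j) := by
    simp only [welfare, expectedUtility, hl, Finset.mul_sum]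
    rw [Finset.sum_comm]
    exact Finset.sum_congr rfl fun j _ => Finset.sum_congr rfl fun i _ => by ring
  have hle := sum_mul_le_of_le hp fun j => hbest (l j)
  rw [← hpermuted, sum_mul_welfare] at hle
  simpa only [envy, mul_sub, Finset.sum_sub_distrib, sub_nonpos] using hle

lemma IsBestResponse.of_tendsto {x g : ℕ → ι → ℝ} {x₀ g₀ : ι → ℝ}
    (h : ∀ m, IsBestResponse (x m) (g m)) (hx : Tendsto x atTop (𝓝 x₀))
    (hg : Tendsto g atTop (𝓝 g₀)) : IsBestResponse x₀ g₀ := fun i =>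
  le_of_tendsto_of_tendsto' (hg.apply_nhds i)
    (tendsto_finsetSum _ fun l _ => (hx.apply_nhds l).mul (hg.apply_nhds l)) fun m => h m i

lemma exists_perturbed_equilibrium [Nonempty ι] [Nonempty κ] (A : κ → ι → β) (u : ι → β → ℝ)
    (ε : ℝ) :
    ∃ z ∈ stdSimplex ℝ (ι × ι) ×ˢ stdSimplex ℝ κ, IsBestResponse z.1 (envy A u z.2) ∧
      IsBestResponse z.2 (welfare A u fun i => marginalFst z.1 i + ε) := by
  have hweights : Continuous fun (z : (ι × ι → ℝ) × (κ → ℝ)) i => marginalFst z.1 i + ε :=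
    (continuous_marginalFst.comp continuous_fst).add continuous_const
  obtain ⟨y, hy, p, hp, hbest⟩ := exists_isBestResponse_pair
    (continuous_envy.comp continuous_snd).continuousOn
    (continuous_welfare.comp hweights).continuousOn
  exact ⟨(y, p), ⟨hy, hp⟩, hbest⟩

-- Positive perturbations of the weights give efficient equilibria, and efficiency survives in the
-- limit because the limit has no larger support than the equilibria approaching it.
lemma exists_isParetoEfficient_equilibrium [Nonempty ι] [Nonempty κ] (A : κ → ι → β)
    (u : ι → β → ℝ) :
    ∃ y ∈ stdSimplex ℝ (ι × ι), ∃ p ∈ stdSimplex ℝ κ, IsParetoEfficient A u p ∧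
      IsBestResponse y (envy A u p) ∧ IsBestResponse p (welfare A u (marginalFst y)) := by
  choose z hz hzy hzp using fun m : ℕ => exists_perturbed_equilibrium A u (1 / ((m : ℝ) + 1))
  obtain ⟨⟨y, p⟩, ⟨hy, hp⟩, φ, hφ, hlim⟩ :=
    ((isCompact_stdSimplex ℝ (ι × ι)).prod (isCompact_stdSimplex ℝ κ)).tendsto_subseq hz
  have hy_lim : Tendsto (fun m => (z (φ m)).1) atTop (𝓝 y) := hlim.fst_nhds
  have hp_lim : Tendsto (fun m => (z (φ m)).2) atTop (𝓝 p) := hlim.snd_nhds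
  have hweights : Tendsto (fun m i => marginalFst (z (φ m)).1 i + 1 / ((φ m : ℝ) + 1)) atTop
      (𝓝 (marginalFst y)) := by
    refine tendsto_pi_nhds.2 fun i => ?_
    have hε := (tendsto_one_div_add_atTop_nhds_zero_nat (𝕜 := ℝ)).comp hφ.tendsto_atTop
    simpa only [add_zero, Function.comp_apply] using
      (((continuous_marginalFst.tendsto y).comp hy_lim).apply_nhds i).add hε
  have hsupport : ∀ᶠ m in atTop, ∀ j, p j ≠ 0 → (z (φ m)).2 j ≠ 0 :=
    eventually_all.2 fun j => eventually_imp_distrib_left.2 (hp_lim.apply_nhds j).eventually_ne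
  obtain ⟨m, hm⟩ := hsupport.exists
  have hPE : IsParetoEfficient A u (z (φ m)).2 := by
    refine (hzp (φ m)).isParetoEfficient fun i => add_pos_of_nonneg_of_pos ?_ (by positivity)
    exact (marginalFst_mem_stdSimplex (hz (φ m)).1).1 i
  exact ⟨y, hy, p, hp, hPE.of_support_subset (hz (φ m)).2 hp fun j => not_imp_not.1 (hm j),
    .of_tendsto (fun m => hzy (φ m)) hy_lim ((continuous_envy.tendsto p).comp hp_lim),
    .of_tendsto (fun m => hzp (φ m)) hp_lim ((continuous_welfare.tendsto _).comp hweights)⟩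

end FairDivision

theorem stmt11_general {ι κ β : Type*} [Finite ι] [Fintype κ] [Nonempty κ] {A : κ → ι → β}
    (u : ι → β → ℝ) (hA : IsSwappable A) :
    ∃ p ∈ stdSimplex ℝ κ, IsParetoEfficient A u p ∧ IsEnvyFree A u p := by
  classical
  cases nonempty_fintype ι
  obtain _ | _ := isEmpty_or_nonempty ι
  · exact ⟨Pi.single (Classical.arbitrary κ) 1, single_mem_stdSimplex ℝ _,
      fun ⟨_, _, _, i, _⟩ => isEmptyElim i, fun i => isEmptyElim i⟩
  obtain ⟨y, hy, p, hp, hPE, hy_best, hp_best⟩ := exists_isParetoEfficient_equilibrium A u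
  have henvy := nonpos_of_isBestResponse_of_forall_perm hy hy_best (fun i => sub_self _)
    fun σ => hA.sum_mul_envy_nonpos hp hp_best σ
  exact ⟨p, hp, hPE, fun i h => sub_nonpos.1 (henvy (i, h))⟩

/-- Main theorem: If the allocation set is swappable, then there
exists a mixed allocation that is both Pareto Efficient and envy-free. -/
theorem stmt11 {n m k : ℕ} (hk : 0 < k)
    (A : Fin k → Fin n → Finset (Fin m))
    (hdisj : ∀ j : Fin k, ∀ i i' : Fin n, i ≠ i' → Disjoint (A j i) (A j i'))
    (u : Fin n → Finset (Fin m) → ℝ)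
    (hswap : ∀ j : Fin k, ∀ g h : Fin n, ∃ l : Fin k,
      (∀ i, i ≠ g → i ≠ h → A l i = A j i) ∧ A l g = A j h ∧ A l h = A j g) :
    ∃ p : Fin k → ℝ, (∀ j, 0 ≤ p j) ∧ (∑ j, p j = 1) ∧
      (¬ ∃ q : Fin k → ℝ, (∀ j, 0 ≤ q j) ∧ (∑ j, q j = 1) ∧
        (∀ i, ∑ j, p j * u i (A j i) ≤ ∑ j, q j * u i (A j i)) ∧
        (∃ i, ∑ j, p j * u i (A j i) < ∑ j, q j * u i (A j i))) ∧
      (∀ i h : Fin n, ∑ j, p j * u i (A j h) ≤ ∑ j, p j * u i (A j i)) := by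
  have : Nonempty (Fin k) := ⟨⟨0, hk⟩⟩
  obtain ⟨p, hp, hPE, hEF⟩ := stmt11_general u hswap
  exact ⟨p, hp.1, hp.2, fun ⟨q, hq₀, hq₁, hq⟩ => hPE ⟨q, ⟨hq₀, hq₁⟩, hq⟩, hEF⟩
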